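/- arXiv:1609.09379 — 13 statements merged into one kernel-verified Lean document; each statement's English description precedes it below -/
import Mathlib

section
/- Let n = 2m for a positive integer m, and let α, β be nonzero elements of F_{q^n} satisfying α^{q^m} + α = 0 and β^{q^m + 1} = 1. Then the map M : F_{q^n} → F_{q^n} given by M(x) = αβ·x^{q^m} + α·x is F_q-linear, is not the zero map, and satisfies M(M(x)) = 0 for all x ∈ F_{q^n}. -/
/-- Let `n = 2m`, and let `α, β` be nonzero elements of `F_{q^n}` with
`α^{q^m} + α = 0` and `β^{q^m+1} = 1`.  Then `M x = αβ x^{q^m} + α x` is `F_q`-linear,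
not the zero map, and satisfies `M (M x) = 0` for all `x`. -/
theorem stmt_2 {Fq K : Type*} [Field Fq] [Field K] [Algebra Fq K]
    [Fintype Fq] [Fintype K] (q n m : ℕ)
    (hq : Fintype.card Fq = q) (hcard : Fintype.card K = q ^ n) (hn : 1 < n)
    (hm : 0 < m) (hnm : n = 2 * m)
    (α β : K) (hα : α ≠ 0) (hβ : β ≠ 0)
    (hα' : α ^ q ^ m + α = 0) (hβ' : β ^ (q ^ m + 1) = 1)
    (M : K → K) (hM : ∀ x, M x = α * β * x ^ q ^ m + α * x) :
    (∀ x y, M (x + y) = M x + M y) ∧ (∀ (c : Fq) (x : K), M (c • x) = c • M x) ∧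
      (∃ x, M x ≠ 0) ∧ (∀ x, M (M x) = 0) := by
  subst hq
  have hq1 : 1 < Fintype.card Fq := Fintype.one_lt_card
  obtain ⟨φ, hφ⟩ : ∃ φ : K →ₐ[Fq] K, ∀ x, φ x = x ^ (Fintype.card Fq) ^ m := by
    clear hm hnm hα' hβ' hM
    induction m with
    | zero => exact ⟨AlgHom.id Fq K, fun x => by simp⟩
    | succ k ih =>
      obtain ⟨φ, hφ⟩ := ih
      refine ⟨(FiniteField.frobeniusAlgHom Fq K).comp φ, fun x => ?_⟩
      simp [hφ, ← pow_mul, pow_succ]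
  have hQ1 : 1 < (Fintype.card Fq) ^ m := Nat.one_lt_pow hm.ne' hq1
  have hcard2 : Fintype.card K = (Fintype.card Fq) ^ m * (Fintype.card Fq) ^ m := by
    rw [hcard, hnm, two_mul, pow_add]
  rw [pow_succ, ← hφ] at hβ'
  rw [← hφ] at hα'
  have hφφ : ∀ x, φ (φ x) = x := fun x => by
    rw [hφ, hφ, ← pow_mul, ← hcard2, FiniteField.pow_card]
  simp only [← hφ] at hM
  refine ⟨fun x y => ?_, fun c x => ?_, ?_, fun x => ?_⟩
  · simp only [hM, map_add]; ring
  · simp only [hM, map_smul, smul_add, mul_smul_comm]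
  · by_contra! h
    have h1 : β = -1 := by
      have := h 1
      rw [hM, map_one] at this
      have h2 : α * (β + 1) = 0 := by linear_combination this
      exact eq_neg_of_add_eq_zero_left ((mul_eq_zero.mp h2).resolve_left hα)
    have h2 : ∀ x, φ x = x := fun x => by
      have := h x
      rw [hM, h1] at this
      have h3 : α * (x - φ x) = 0 := by linear_combination this
      exact (sub_eq_zero.mp ((mul_eq_zero.mp h3).resolve_left hα)).symm
    have hne := FiniteField.X_pow_card_sub_X_ne_zero K hQ1
    have hle := Polynomial.card_le_degree_of_subset_roots (Z := Finset.univ)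
      (p := (Polynomial.X ^ (Fintype.card Fq) ^ m - Polynomial.X : Polynomial K)) (by
        intro x _
        rw [Polynomial.mem_roots hne]
        simp [← hφ, h2])
    rw [FiniteField.X_pow_card_sub_X_natDegree_eq K hQ1, Finset.card_univ, hcard2] at hle
    nlinarith
  · have hα2 : φ α = -α := eq_neg_of_add_eq_zero_left hα'
    simp only [hM, map_add, map_mul, hφφ, hα2]
    linear_combination (-α ^ 2 * x) * hβ'
end

section
/- Suppose the polynomial g(x) ∈ F_q[x] satisfies g(x + a) = g(x) as polynomials in F_{q^n}[x] for every a ∈ F_{q^n} (i.e., the composition of g with x + a equals g for all a ∈ F_{q^n}). Then there exists a polynomial R(x) ∈ F_q[x] such that g(x) = R(x^{q^n} − x), i.e., g equals the composition of R with the polynomial x^{q^n} − x. -/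
open Polynomial in
theorem stmt_3_aux {Fq K : Type*} [Field Fq] [Field K] [Algebra Fq K]
    [Fintype K] (N : ℕ) (hcard : Fintype.card K = N) (d : ℕ) :
    ∀ g : Polynomial Fq, g.natDegree ≤ d →
    (∀ a : K, (g.map (algebraMap Fq K)).comp (X + C a) = g.map (algebraMap Fq K)) →
    ∃ R : Polynomial Fq, g = R.comp (X ^ N - X) := by
  have hN : 1 < N := hcard ▸ Fintype.one_lt_card
  have hmon : (X ^ N - X : Fq[X]).Monic := by
    apply monic_X_pow_sub
    rw [degree_X]; exact_mod_cast hN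
  have hdeg : (X ^ N - X : Fq[X]).natDegree = N :=
    FiniteField.X_pow_card_sub_X_natDegree_eq Fq hN
  have hroot : ∀ a : K, a ^ N = a := fun a => hcard ▸ FiniteField.pow_card a
  have hPinv : ∀ a : K, ((X ^ N - X : Fq[X]).map (algebraMap Fq K)).comp (X + C a)
      = (X ^ N - X : Fq[X]).map (algebraMap Fq K) := by
    intro a
    obtain ⟨p, hp⟩ := CharP.exists K
    obtain ⟨m, hpp, hm⟩ := FiniteField.card K p
    haveI : Fact p.Prime := ⟨hpp⟩
    have h1 : (X + C a : K[X]) ^ N = X ^ N + C a := by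
      have : N = p ^ (m : ℕ) := by rw [← hcard, hm]
      conv_lhs => rw [this, add_pow_char_pow, ← this, ← C_pow, hroot]
    simp [h1]
  induction d with
  | zero =>
    intro g hd _
    rw [eq_C_of_natDegree_le_zero hd]
    exact ⟨C (g.coeff 0), by simp⟩
  | succ d ih =>
    intro g hd hg
    have hev : ∀ a : K, (g.map (algebraMap Fq K)).eval a = algebraMap Fq K (g.coeff 0) := by
      intro a
      have := congrArg (eval 0) (hg a)
      rw [eval_comp] at this
      simp only [eval_add, eval_X, eval_C, zero_add] at this
      rw [this, ← coeff_zero_eq_eval_zero, coeff_map]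
    have hdvd : (X ^ N - X : Fq[X]) ∣ g - C (g.coeff 0) := by
      rw [← modByMonic_eq_zero_iff_dvd hmon]
      set h := g - C (g.coeff 0) with hh
      have hlt : (h %ₘ (X ^ N - X)).natDegree < N := by
        have := natDegree_modByMonic_lt h hmon (by intro h1; rw [h1] at hdeg; simp at hdeg; omega)
        rwa [hdeg] at this
      have h0 : (h %ₘ (X ^ N - X)).map (algebraMap Fq K) = 0 := by
        apply eq_zero_of_natDegree_lt_card_of_eval_eq_zero _ (f := (id : K → K)) Function.injective_id
        · intro a
          have := congrArg (fun t => eval a (t.map (algebraMap Fq K)))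
            (modByMonic_add_div h (X ^ N - X))
          simpa [hroot, hh, hev, -eval_map_algebraMap] using this
        · rw [natDegree_map, hcard]; exact hlt
      exact (Polynomial.map_eq_zero _).1 h0
    obtain ⟨Q, hQ⟩ := hdvd
    have hgQ : g = C (g.coeff 0) + (X ^ N - X) * Q := by rw [← hQ]; ring
    have hQd : Q.natDegree ≤ d := by
      by_cases hQ0 : Q = 0
      · simp [hQ0]
      have h1 := congrArg natDegree hQ
      rw [natDegree_sub_C, hmon.natDegree_mul' hQ0, hdeg] at h1
      omega
    obtain ⟨R, hR⟩ := ih Q hQd (by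
      intro a
      have h1 := hg a
      rw [hgQ, Polynomial.map_add, Polynomial.map_mul, add_comp, mul_comp, hPinv, map_C, C_comp] at h1
      exact mul_left_cancel₀ (hmon.map _).ne_zero (add_left_cancel h1))
    refine ⟨C (g.coeff 0) + X * R, ?_⟩
    rw [add_comp, mul_comp, ← hR, C_comp, X_comp]
    exact hgQ

/-- Suppose `g ∈ F_q[x]` satisfies `g(x + a) = g(x)` as polynomials in
`F_{q^n}[x]` for every `a ∈ F_{q^n}`.  Then there exists `R ∈ F_q[x]` such that
`g(x) = R(x^{q^n} - x)`. -/
theorem stmt_3 {Fq K : Type*} [Field Fq] [Field K] [Algebra Fq K]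
    [Fintype Fq] [Fintype K] (q n : ℕ)
    (hq : Fintype.card Fq = q) (hcard : Fintype.card K = q ^ n) (hn : 1 < n)
    (g : Polynomial Fq)
    (hg : ∀ a : K, (g.map (algebraMap Fq K)).comp (Polynomial.X + Polynomial.C a)
        = g.map (algebraMap Fq K)) :
    ∃ R : Polynomial Fq, g = R.comp (Polynomial.X ^ q ^ n - Polynomial.X) := by
  exact stmt_3_aux (K := K) (q ^ n) hcard g.natDegree g le_rfl hg
end

section
/- Let L(x) = ∑_{i=0}^{n-1} a_i x^{q^i} be a nonzero linearized polynomial with all coefficients a_i ∈ F_q, let l(x) = ∑_{i=0}^{n-1} a_i x^i ∈ F_q[x] be its conventional q-associate, and let t ≥ 2. Then the map induced by L on F_{q^n} is not identically zero with t-fold composition identically zero (i.e., L is a t-NLP over F_{q^n}) if and only if x^n − 1 divides l(x)^t in F_q[x]. -/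
/-- Let `L = ∑_{i=0}^{n-1} a_i x^{q^i}` be a nonzero linearized polynomial
with coefficients in `F_q`, `l = ∑_{i=0}^{n-1} a_i x^i` its conventional `q`-associate, and
`t ≥ 2`.  Then `L` is a `t`-NLP over `F_{q^n}` (the induced map `M` is not identically zero
but its `t`-fold composition is identically zero) iff `x^n - 1 ∣ l^t` in `F_q[x]`. -/
theorem stmt_5 {Fq K : Type*} [Field Fq] [Field K] [Algebra Fq K]
    [Fintype Fq] [Fintype K] (q n : ℕ)
    (hq : Fintype.card Fq = q) (hcard : Fintype.card K = q ^ n) (hn : 1 < n)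
    (t : ℕ) (ht : 2 ≤ t) (a : ℕ → Fq)
    (hL : ∃ i < n, a i ≠ 0)
    (M : K → K)
    (hM : ∀ z, M z = ∑ i ∈ Finset.range n, algebraMap Fq K (a i) * z ^ q ^ i) :
    ((∃ z, M z ≠ 0) ∧ ∀ z, M^[t] z = 0) ↔
      (Polynomial.X ^ n - 1 : Polynomial Fq)
        ∣ (∑ i ∈ Finset.range n, Polynomial.C (a i) * Polynomial.X ^ i) ^ t := by
  have hfin : Module.finrank Fq K = n := by
    have h := Module.card_eq_pow_finrank (K := Fq) (V := K)
    rw [hcard, hq] at h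
    have hq1 : 1 < q := hq ▸ Fintype.one_lt_card
    exact (Nat.pow_right_injective hq1 h).symm
  have hmin := FiniteField.minpoly_frobeniusAlgHom Fq K
  rw [hfin] at hmin
  set φ := (FiniteField.frobeniusAlgHom Fq K).toLinearMap with hφ
  set l : Polynomial Fq := ∑ i ∈ Finset.range n, Polynomial.C (a i) * Polynomial.X ^ i with hl
  have hdvd : ∀ p : Polynomial Fq, (Polynomial.X ^ n - 1 : Polynomial Fq) ∣ p ↔
      Polynomial.aeval φ p = 0 := by
    intro p
    rw [← hmin, minpoly.dvd_iff]
  have hpow : ∀ (i : ℕ) (z : K), (φ ^ i) z = z ^ q ^ i := by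
    intro i
    induction i with
    | zero => intro z; simp
    | succ i ih =>
      intro z
      rw [pow_succ, Module.End.mul_apply, ih]
      have : φ z = z ^ q := by
        rw [← hq, Fintype.card_eq_nat_card]; simp [hφ]
      rw [this, ← pow_mul, pow_succ']
  have hMl : M = ⇑(Polynomial.aeval φ l) := by
    funext z
    rw [hM, hl, map_sum, LinearMap.sum_apply]
    refine Finset.sum_congr rfl fun i _ => ?_
    rw [map_mul, Polynomial.aeval_C, map_pow, Polynomial.aeval_X, Module.End.mul_apply, hpow,
      Module.algebraMap_end_apply, Algebra.smul_def]
  have hlt : l.degree < n := by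
    refine lt_of_le_of_lt (Polynomial.degree_sum_le _ _) ?_
    refine (Finset.sup_lt_iff (WithBot.bot_lt_coe n)).2 ?_
    intro i hi
    refine lt_of_le_of_lt (Polynomial.degree_C_mul_X_pow_le _ _) ?_
    exact WithBot.coe_lt_coe.2 (Finset.mem_range.mp hi)
  have hl0 : l ≠ 0 := by
    obtain ⟨i, hi, hai⟩ := hL
    intro h
    apply hai
    have := congrArg (fun p => Polynomial.coeff p i) h
    simpa [hl, Polynomial.finsetSum_coeff, Polynomial.coeff_C_mul_X_pow, hi] using this
  have hne : ∃ z, M z ≠ 0 := by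
    by_contra! h
    have h0 : Polynomial.aeval φ l = 0 := by
      ext z
      rw [← hMl, h]; rfl
    have h1 := Polynomial.degree_le_of_dvd ((hdvd l).2 h0) hl0
    have h2 : (Polynomial.X ^ n - 1 : Polynomial Fq).degree = n := by
      simpa using Polynomial.degree_X_pow_sub_C (R := Fq) (by omega : 0 < n) 1
    rw [h2] at h1
    exact absurd hlt (not_lt.mpr h1)
  rw [hdvd, map_pow, hMl, ← Module.End.coe_pow]
  constructor
  · rintro ⟨_, h⟩
    ext z
    exact h z
  · intro h
    refine ⟨hMl ▸ hne, fun z => by rw [h]; rfl⟩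
end

section
/- Let p be the characteristic of F_q and suppose n is not divisible by p. Then for every t ≥ 2 there is no t-NLP over F_{q^n} with all coefficients in F_q; that is, for every linearized polynomial L(x) = ∑_{i} a_i x^{q^i} with a_i ∈ F_q, if the t-fold composition of the map induced by L on F_{q^n} is identically zero, then the map induced by L is itself identically zero on F_{q^n}. -/
/-- Let `p = char F_q` and suppose `p ∤ n`.  Then for every `t ≥ 2` there is
no `t`-NLP over `F_{q^n}` with all coefficients in `F_q`: for every linearized polynomial
`L = ∑_i a_i x^{q^i}` with `a_i ∈ F_q`, if the `t`-fold composition of the induced map is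
identically zero on `F_{q^n}`, then the induced map is itself identically zero. -/
theorem stmt_6 {Fq K : Type*} [Field Fq] [Field K] [Algebra Fq K]
    [Fintype Fq] [Fintype K] (q n : ℕ)
    (hq : Fintype.card Fq = q) (hcard : Fintype.card K = q ^ n) (hn : 1 < n)
    (p : ℕ) (hp : CharP Fq p) (hpn : ¬ p ∣ n) :
    ∀ t : ℕ, 2 ≤ t → ∀ (k : ℕ) (a : ℕ → Fq) (M : K → K),
      (∀ z, M z = ∑ i ∈ Finset.range (k + 1), algebraMap Fq K (a i) * z ^ q ^ i) →
      (∀ z : K, M^[t] z = 0) → ∀ z : K, M z = 0 := by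
  intro t ht k a M hM hMt z
  let φ : Module.End Fq K := (FiniteField.frobeniusAlgHom Fq K).toLinearMap
  have hφ : ∀ i z, (φ ^ i) z = z ^ q ^ i := by
    intro i
    induction i with
    | zero => intro z; simp
    | succ i ih =>
      intro z
      rw [pow_succ, Module.End.mul_apply, ih]
      change (z ^ Fintype.card Fq) ^ q ^ i = _
      rw [hq, ← pow_mul, pow_succ, mul_comm]
  let f : Polynomial Fq := ∑ i ∈ Finset.range (k + 1), Polynomial.C (a i) * Polynomial.X ^ i
  have hf : ∀ z, Polynomial.aeval φ f z = M z := by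
    intro z
    rw [hM]
    simp [f, hφ, LinearMap.sum_apply, Algebra.smul_def]
  have hfM : M = ⇑(Polynomial.aeval φ f) := funext fun z => (hf z).symm
  have h0 : Polynomial.aeval φ (f ^ t) = 0 := by
    ext z
    rw [map_pow, Module.End.pow_apply, ← hfM, hMt]; rfl
  have h1 : Polynomial.aeval φ (Polynomial.X ^ n - 1 : Polynomial Fq) = 0 := by
    ext z
    have : z ^ q ^ n = z := by rw [← hcard]; exact FiniteField.pow_card z
    simp [hφ, this]
  have hs : Squarefree (Polynomial.X ^ n - 1 : Polynomial Fq) := by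
    apply Polynomial.Separable.squarefree
    rw [Polynomial.X_pow_sub_one_separable_iff]
    rwa [Ne, CharP.cast_eq_zero_iff Fq p]
  have hm : Squarefree (minpoly Fq φ) := hs.squarefree_of_dvd (minpoly.dvd _ _ h1)
  have hd : minpoly Fq φ ∣ f := hm.isRadical t f (minpoly.dvd _ _ h0)
  rw [← hf, (minpoly.dvd_iff).1 hd]; rfl
end

section
/- Let t ≥ 2, let p be the characteristic of F_q, and write n = p^s·u with gcd(u, p) = 1 and s ≥ 1. Let r(x) ∈ F_q[x] be any nonzero polynomial of degree at most v = n − 1 − u·⌈p^s/t⌉, and set l(x) = r(x)·(x^u − 1)^{⌈p^s/t⌉}. Then the linearized q-associate L of l is a t-NLP over F_{q^n}: the map induced by L on F_{q^n} is not identically zero, but its t-fold composition is identically zero. -/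
/-- Let `t ≥ 2`, `p = char F_q`, `n = p^s u` with `gcd(u, p) = 1` and
`s ≥ 1`.  Let `r ∈ F_q[x]` be nonzero of degree at most `v = n - 1 - u⌈p^s/t⌉`, and set
`l = r (x^u - 1)^{⌈p^s/t⌉}`.  Then the linearized `q`-associate `L` of `l` is a `t`-NLP over
`F_{q^n}`: the induced map is not identically zero, but its `t`-fold composition is. -/
theorem stmt_7 {Fq K : Type*} [Field Fq] [Field K] [Algebra Fq K]
    [Fintype Fq] [Fintype K] (q n : ℕ)
    (hq : Fintype.card Fq = q) (hcard : Fintype.card K = q ^ n) (hn : 1 < n)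
    (t p s u : ℕ) (ht : 2 ≤ t) (hp : CharP Fq p) (hs : 1 ≤ s)
    (hu : Nat.Coprime u p) (hnsu : n = p ^ s * u)
    (r : Polynomial Fq) (hr : r ≠ 0)
    (hdeg : r.natDegree ≤ n - 1 - u * ((p ^ s + t - 1) / t))
    (l : Polynomial Fq)
    (hl : l = r * (Polynomial.X ^ u - 1) ^ ((p ^ s + t - 1) / t))
    (M : K → K)
    (hM : ∀ z, M z = ∑ i ∈ Finset.range (l.natDegree + 1),
        algebraMap Fq K (l.coeff i) * z ^ q ^ i) :
    (∃ z, M z ≠ 0) ∧ ∀ z, M^[t] z = 0 := by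
  classical
  have hpp : p.Prime := CharP.char_is_prime Fq p
  haveI : Fact p.Prime := ⟨hpp⟩
  have hq1 : 1 < Fintype.card Fq := Fintype.one_lt_card
  have hfin : Module.finrank Fq K = n := by
    have h := Module.card_eq_pow_finrank (K := Fq) (V := K)
    rw [hcard, ← hq] at h
    exact (Nat.pow_right_injective hq1 h).symm
  haveI : FiniteDimensional Fq K := Module.Finite.of_finite
  set F : K →ₗ[Fq] K := (FiniteField.frobeniusAlgHom Fq K).toLinearMap with hF
  have hmin : minpoly Fq F = Polynomial.X ^ n - 1 := by
    rw [hF, FiniteField.minpoly_frobeniusAlgHom, hfin]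
  have hFp : ∀ i z, (F ^ i) z = z ^ q ^ i := by
    intro i
    induction i with
    | zero => intro z; simp
    | succ k ih =>
      intro z
      rw [pow_succ, Module.End.mul_apply, ih]
      simp [hF, hq, ← pow_mul, pow_succ, mul_comm]
  have hMF : M = ⇑(Polynomial.aeval F l) := by
    funext z
    rw [hM, Polynomial.aeval_eq_sum_range, LinearMap.sum_apply]
    refine Finset.sum_congr rfl fun i _ => ?_
    rw [LinearMap.smul_apply, hFp, Algebra.smul_def]
  set c := (p ^ s + t - 1) / t with hc
  have hps : 2 ≤ p ^ s := le_trans hpp.two_le (Nat.le_self_pow (by omega) p)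
  have hu0 : 0 < u := by
    rcases Nat.eq_zero_or_pos u with h | h
    · subst h; simp at hnsu; omega
    · exact h
  have hcl : c < p ^ s := by
    rw [hc, Nat.div_lt_iff_lt_mul (by omega)]
    have : p ^ s * 2 + 2 * t ≤ p ^ s * t + 4 := by
      obtain ⟨a, ha⟩ := Nat.exists_eq_add_of_le hps
      obtain ⟨b, hb⟩ := Nat.exists_eq_add_of_le ht
      rw [ha, hb]; nlinarith [Nat.zero_le (a * b)]
    omega
  have hct : p ^ s ≤ c * t := by
    have h1 := Nat.div_add_mod (p ^ s + t - 1) t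
    have h2 := Nat.mod_lt (p ^ s + t - 1) (show t > 0 by omega)
    rw [← hc, mul_comm] at h1
    omega
  have hmon : (Polynomial.X ^ u - 1 : Polynomial Fq).Monic :=
    Polynomial.monic_X_pow_sub_C (1 : Fq) hu0.ne'
  have hdu : (Polynomial.X ^ u - 1 : Polynomial Fq).natDegree = u :=
    Polynomial.natDegree_X_pow_sub_C (r := (1 : Fq))
  have hl0 : l ≠ 0 := by
    rw [hl]; exact mul_ne_zero hr (pow_ne_zero _ hmon.ne_zero)
  have hld : l.natDegree < n := by
    rw [hl, Polynomial.natDegree_mul hr (pow_ne_zero _ hmon.ne_zero),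
      Polynomial.natDegree_pow, hdu]
    have : u * c + u ≤ n := by
      rw [hnsu]; nlinarith
    rw [mul_comm c u]
    omega
  constructor
  · by_contra! h
    have h0 : Polynomial.aeval F l = 0 := by
      ext z; rw [← hMF]; simpa using h z
    have hd := minpoly.dvd Fq F h0
    have := Polynomial.natDegree_le_of_dvd hd hl0
    rw [hmin, show (Polynomial.X ^ n - 1 : Polynomial Fq).natDegree = n from
      Polynomial.natDegree_X_pow_sub_C (r := (1 : Fq))] at this
    omega
  · have hz : (Polynomial.aeval F l) ^ t = 0 := by
      rw [← map_pow, ← minpoly.dvd_iff, hmin, hl, mul_pow, ← pow_mul]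
      apply Dvd.dvd.mul_left
      have : (Polynomial.X ^ n - 1 : Polynomial Fq) = (Polynomial.X ^ u - 1) ^ p ^ s := by
        rw [sub_pow_char_pow, one_pow, ← pow_mul, hnsu, mul_comm u]
      rw [this]
      exact pow_dvd_pow _ hct
    intro z
    rw [hMF, ← Module.End.pow_apply, hz]; rfl
end

section
/- Let t ≥ 2, let M : F_{q^n} → F_{q^n} be an F_q-linear map that is not the zero map and whose t-fold composition M^(t) is the zero map, and let K : F_{q^n} → F_{q^n} be a bijective F_q-linear map that commutes with M (K∘M = M∘K). If K is a complete permutation of F_{q^n}, i.e., both K and x ↦ K(x) + x are bijections of F_{q^n}, then M + K is also a complete permutation of F_{q^n}: both x ↦ M(x) + K(x) and x ↦ M(x) + K(x) + x are bijections. -/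
/-- Let `t ≥ 2`, `M` an `F_q`-linear map of `F_{q^n}`, not zero, with
`M^(t) = 0`, and `N` a bijective `F_q`-linear map commuting with `M`.  If `N` is a complete
permutation (both `N` and `x ↦ N x + x` are bijections), then so is `M + N`: both
`x ↦ M x + N x` and `x ↦ M x + N x + x` are bijections. -/
theorem stmt_9 {Fq K : Type*} [Field Fq] [Field K] [Algebra Fq K]
    [Fintype Fq] [Fintype K] (q n : ℕ)
    (hq : Fintype.card Fq = q) (hcard : Fintype.card K = q ^ n) (hn : 1 < n)
    (t : ℕ) (ht : 2 ≤ t) (M N : Module.End Fq K)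
    (hM0 : M ≠ 0) (hMt : M ^ t = 0)
    (hcomm : N * M = M * N)
    (hN : Function.Bijective ⇑N)
    (hN' : Function.Bijective (fun x : K => N x + x)) :
    Function.Bijective (fun x : K => M x + N x) ∧
      Function.Bijective (fun x : K => M x + N x + x) := by
  have key : ∀ A : Module.End Fq K, Commute M A → Function.Bijective ⇑A →
      Function.Bijective ⇑(M + A) := by
    intro A hc hA
    rw [← Module.End.isUnit_iff] at hA ⊢
    have hnil : IsNilpotent M := ⟨t, hMt⟩
    exact hnil.isUnit_add_right_of_commute hA hc
  have hc : Commute M N := hcomm.symm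
  refine ⟨key N hc hN, ?_⟩
  have h := key (N + 1) (hc.add_right (Commute.one_right M)) hN'
  have e : (fun x : K => M x + N x + x) = ⇑(M + (N + 1)) := by
    funext x
    simp [add_assoc]
  rw [e]
  exact h
end

section
/- Let p be the characteristic of F_q, let t ≥ 2, let M : F_{q^n} → F_{q^n} be an F_q-linear map that is not the zero map and whose t-fold composition M^(t) is the zero map, and let K : F_{q^n} → F_{q^n} be a bijective F_q-linear map commuting with M. Let s be the order of K (least positive integer with K^(s) = id) and let e be the least nonnegative integer with p^e ≥ t (i.e., e = ⌈log_p t⌉). Then the order of the bijection M + K divides lcm(s, p^e); equivalently, the lcm(s, p^e)-fold composition of M + K is the identity map on F_{q^n}. -/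
/-- Let `p = char F_q`, `t ≥ 2`, `M` a nonzero `F_q`-linear map of
`F_{q^n}` with `M^(t) = 0`, and `N` a bijective `F_q`-linear map commuting with `M`, of
order `s`.  Let `e` be the least nonnegative integer with `p^e ≥ t`.  Then the order of the
bijection `M + N` divides `lcm(s, p^e)`; equivalently, the `lcm(s, p^e)`-fold composition of
`M + N` is the identity map. -/
theorem stmt_10 {Fq K : Type*} [Field Fq] [Field K] [Algebra Fq K]
    [Fintype Fq] [Fintype K] (q n : ℕ)
    (hq : Fintype.card Fq = q) (hcard : Fintype.card K = q ^ n) (hn : 1 < n)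
    (p : ℕ) (hp : CharP Fq p)
    (t : ℕ) (ht : 2 ≤ t) (M N : Module.End Fq K)
    (hM0 : M ≠ 0) (hMt : M ^ t = 0)
    (hN : Function.Bijective ⇑N) (hcomm : N * M = M * N)
    (s : ℕ) (hs : 0 < s) (hNs : N ^ s = 1)
    (hsmin : ∀ j : ℕ, 0 < j → j < s → N ^ j ≠ 1)
    (e : ℕ) (he : t ≤ p ^ e) (hemin : ∀ e' : ℕ, t ≤ p ^ e' → e ≤ e') :
    (M + N) ^ Nat.lcm s (p ^ e) = 1 := by
  have : Fact p.Prime := ⟨CharP.char_is_prime Fq p⟩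
  have : CharP (Module.End Fq K) p :=
    charP_of_injective_algebraMap (algebraMap Fq (Module.End Fq K)).injective p
  have hc : Commute M N := hcomm.symm
  have h1 : (M + N) ^ p ^ e = N ^ p ^ e := by
    rw [add_pow_char_pow_of_commute _ _ hc, pow_eq_zero_of_le he hMt, zero_add]
  obtain ⟨k, hk⟩ := Nat.dvd_lcm_right s (p ^ e)
  obtain ⟨l, hl⟩ := Nat.dvd_lcm_left s (p ^ e)
  have h2 : (M + N) ^ Nat.lcm s (p ^ e) = N ^ Nat.lcm s (p ^ e) := by
    rw [hk, pow_mul, pow_mul, h1]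
  rw [h2, hl, pow_mul, hNs, one_pow]
end

section
/- Let p be the characteristic of F_q, let M : F_{q^n} → F_{q^n} be an F_q-linear map that is not the zero map and satisfies M(M(x)) = 0 for all x ∈ F_{q^n}, and let γ ∈ F_q be a nonzero element of multiplicative order s. Then the order of the bijection f(x) = M(x) + γx of F_{q^n} equals p·s. -/
/-- Let `p = char F_q`, `M` a nonzero `F_q`-linear map of `F_{q^n}` with
`M (M x) = 0` for all `x`, and `γ ∈ F_q*` of multiplicative order `s`.  Then the order of
the bijection `f x = M x + γ x` equals `p·s`. -/
theorem stmt_14 {Fq K : Type*} [Field Fq] [Field K] [Algebra Fq K]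
    [Fintype Fq] [Fintype K] (q n : ℕ)
    (hq : Fintype.card Fq = q) (hcard : Fintype.card K = q ^ n) (hn : 1 < n)
    (p : ℕ) (hp : CharP Fq p)
    (M : Module.End Fq K) (hM0 : M ≠ 0) (hM2 : ∀ x : K, M (M x) = 0)
    (γ : Fq) (hγ : γ ≠ 0)
    (s : ℕ) (hs : 0 < s) (hγs : γ ^ s = 1)
    (hsmin : ∀ j : ℕ, 0 < j → j < s → γ ^ j ≠ 1)
    (f : K → K) (hf : ∀ x, f x = M x + algebraMap Fq K γ * x) :
    (∀ x : K, f^[p * s] x = x) ∧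
      ∀ j : ℕ, 0 < j → (∀ x : K, f^[j] x = x) → p * s ≤ j := by
  have hpp : p.Prime := CharP.char_is_prime Fq p
  have : Fact p.Prime := ⟨hpp⟩
  have key : ∀ (k : ℕ) (x : K),
      γ • f^[k] x = ((k : Fq) * γ ^ k) • M x + γ ^ (k + 1) • x := by
    intro k x
    induction k with
    | zero => simp
    | succ k ih =>
      have h1 : γ • M (f^[k] x) = γ ^ (k + 1) • M x := by
        rw [← map_smul, ih, map_add, map_smul, map_smul, hM2, smul_zero, zero_add]
      rw [Function.iterate_succ_apply', hf, ← Algebra.smul_def, smul_add, h1, ih, smul_add,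
        smul_smul, smul_smul, ← add_assoc, ← add_smul]
      congr 2
      · push_cast; ring
      · ring
  constructor
  · intro x
    have h := key (p * s) x
    have h2 : γ ^ (p * s) = 1 := by rw [mul_comm, pow_mul, hγs, one_pow]
    rw [pow_succ, h2] at h
    simp only [Nat.cast_mul, CharP.cast_eq_zero, zero_mul, zero_smul, zero_add, one_mul] at h
    exact smul_right_injective K hγ h
  · intro j hj hfj
    obtain ⟨x, hx⟩ : ∃ x, M x ≠ 0 := by
      by_contra! h
      exact hM0 (LinearMap.ext h)
    have h1 := key j (M x)
    rw [hfj, hM2, smul_zero, zero_add] at h1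
    have h2 : γ = γ ^ (j + 1) := smul_left_injective Fq hx h1
    have h3 : γ ^ j = 1 := by
      rw [pow_succ] at h2
      exact mul_right_cancel₀ hγ (by rw [one_mul, ← h2])
    have h4 := key j x
    rw [hfj, pow_succ, h3, one_mul, mul_one, right_eq_add, smul_eq_zero] at h4
    have h5 : p ∣ j := (CharP.cast_eq_zero_iff Fq p j).1 (h4.resolve_right hx)
    have h6 : s ∣ j := by
      by_contra hd
      have hr : 0 < j % s := Nat.pos_of_ne_zero fun h => hd (Nat.dvd_of_mod_eq_zero h)
      apply hsmin (j % s) hr (Nat.mod_lt _ hs)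
      have h7 := h3
      rw [← Nat.mod_add_div j s, pow_add, pow_mul, hγs, one_pow, mul_one] at h7
      exact h7
    have hc : Nat.Coprime p s := by
      rw [hpp.coprime_iff_not_dvd]
      rintro ⟨t, rfl⟩
      have ht : 0 < t := Nat.pos_of_mul_pos_left hs
      refine hsmin t ht ?_ ?_
      · nlinarith [hpp.two_le]
      · apply frobenius_inj Fq p
        rw [frobenius_def, frobenius_def, one_pow, ← pow_mul, mul_comm, hγs]
    exact Nat.le_of_dvd hj (hc.mul_dvd_of_dvd_of_dvd h5 h6)
end

section
/- Let t ≥ 2, let p be the characteristic of F_q, and write n = p^s·u with gcd(u, p) = 1 and s ≥ 1. Let r(x) ∈ F_q[x] be any nonzero polynomial of degree at most v = n − 1 − u·⌈p^s/t⌉, set l(x) = r(x)·(x^u − 1)^{⌈p^s/t⌉}, and let L_r : F_{q^n} → F_{q^n} be the map induced by the linearized q-associate of l. Let α, β be nonzero elements of F_q and let Tr : F_{q^n} → F_q denote the absolute trace Tr(x) = ∑_{i=0}^{n-1} x^{q^i}. Then the map x ↦ L_r(x) + α·Tr(x) + β·x is a bijection of F_{q^n}; moreover, if β ≠ −1 it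 is a complete permutation, i.e., x ↦ L_r(x) + α·Tr(x) + β·x + x is also a bijection. -/
theorem aux_key {Fq K : Type*} [Field Fq] [Field K] [Algebra Fq K]
    [Fintype Fq] [Fintype K] (q n : ℕ)
    (hq : Fintype.card Fq = q) (hcard : Fintype.card K = q ^ n)
    (t p s u : ℕ) (ht : 2 ≤ t) (hp : CharP Fq p) (hs : 1 ≤ s)
    (hnsu : n = p ^ s * u)
    (r : Polynomial Fq)
    (l : Polynomial Fq)
    (hl : l = r * (Polynomial.X ^ u - 1) ^ ((p ^ s + t - 1) / t))
    (α γ : Fq) (hγ : γ ≠ 0)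
    (g : K → K)
    (hg : ∀ z, g z = (∑ i ∈ Finset.range (l.natDegree + 1),
        algebraMap Fq K (l.coeff i) * z ^ q ^ i)
        + algebraMap Fq K α * (∑ i ∈ Finset.range n, z ^ q ^ i)
        + algebraMap Fq K γ * z) : Function.Bijective g := by
  classical
  have hpp : Fact p.Prime := ⟨(CharP.char_is_prime_or_zero Fq p).resolve_right
    (CharP.char_ne_zero_of_finite Fq p)⟩
  let φ : Module.End Fq K := (FiniteField.frobeniusAlgHom Fq K).toLinearMap
  have hφ : ∀ (i : ℕ) (z : K), (φ ^ i) z = z ^ q ^ i := by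
    intro i
    induction i with
    | zero => intro z; simp
    | succ i ih =>
      intro z
      rw [pow_succ, Module.End.mul_apply, ih]
      have : φ z = z ^ q := by simp [φ, hq, ← Nat.card_eq_fintype_card]
      rw [this, ← pow_mul, pow_succ, mul_comm]
  have hφn : φ ^ n = 1 := by
    ext z
    rw [hφ, ← hcard, FiniteField.pow_card]; rfl
  let T : Polynomial Fq := ∑ i ∈ Finset.range n, Polynomial.X ^ i
  have hX : (Polynomial.X ^ u - 1 : Polynomial Fq) ^ (p ^ s) = Polynomial.X ^ n - 1 := by
    rw [sub_pow_char_pow, one_pow, ← pow_mul, hnsu, mul_comm]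
  have hz : Polynomial.aeval φ (Polynomial.X ^ n - 1 : Polynomial Fq) = 0 := by
    simp [hφn]
  have hlnil : IsNilpotent (Polynomial.aeval φ l) := by
    refine ⟨t, ?_⟩
    rw [← map_pow]
    have hd : (Polynomial.X ^ n - 1 : Polynomial Fq) ∣ l ^ t := by
      rw [hl, mul_pow, ← pow_mul, ← hX]
      refine Dvd.dvd.mul_left (pow_dvd_pow _ ?_) _
      have h1 := Nat.div_add_mod (p ^ s + t - 1) t
      have h2 := Nat.mod_lt (p ^ s + t - 1) (show t > 0 by omega)
      rw [mul_comm] at h1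
      omega
    obtain ⟨c, hc⟩ := hd
    rw [hc, map_mul, hz, zero_mul]
  have hTnil : IsNilpotent (Polynomial.aeval φ T) := by
    refine ⟨2, ?_⟩
    rw [← map_pow]
    have hn0 : (n : Fq) = 0 := by
      rw [hnsu]
      have : (p : Fq) = 0 := CharP.cast_eq_zero Fq p
      push_cast
      rw [this, zero_pow (by omega), zero_mul]
    have hd : (Polynomial.X - Polynomial.C 1 : Polynomial Fq) ∣ T := by
      rw [Polynomial.dvd_iff_isRoot]
      simp [T, Polynomial.IsRoot, Polynomial.eval_finsetSum, hn0]
    obtain ⟨c, hc⟩ := hd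
    have h3 : T * (Polynomial.X - 1) = Polynomial.X ^ n - 1 := geom_sum_mul _ _
    have : T ^ 2 = (Polynomial.X ^ n - 1) * c := by
      rw [← h3, pow_two]
      nth_rewrite 2 [hc]
      simp [mul_assoc]
    rw [this, map_mul, hz, zero_mul]
  let P : Polynomial Fq := l + Polynomial.C α * T + Polynomial.C γ
  have hunit : IsUnit (Polynomial.aeval φ P) := by
    have hN : IsNilpotent (Polynomial.aeval φ (l + Polynomial.C α * T)) := by
      rw [map_add]
      refine Commute.isNilpotent_add ?_ hlnil ?_
      · exact (Commute.all _ _).map (Polynomial.aeval φ)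
      · rw [map_mul]
        exact Commute.isNilpotent_mul_left ((Commute.all _ _).map (Polynomial.aeval φ)) hTnil
    have hU : IsUnit (Polynomial.aeval φ (Polynomial.C γ)) := by
      exact ((Polynomial.isUnit_C.2 hγ.isUnit)).map _
    rw [show Polynomial.aeval φ P = Polynomial.aeval φ (l + Polynomial.C α * T) +
      Polynomial.aeval φ (Polynomial.C γ) from map_add _ _ _]
    exact hN.isUnit_add_right_of_commute hU ((Commute.all _ _).map (Polynomial.aeval φ))
  have hgP : g = Polynomial.aeval φ P := by
    funext z
    rw [hg]
    have hl' : (Polynomial.aeval φ l) z = ∑ i ∈ Finset.range (l.natDegree + 1),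
        algebraMap Fq K (l.coeff i) * z ^ q ^ i := by
      rw [Polynomial.aeval_eq_sum_range]
      simp [LinearMap.sum_apply, hφ, Algebra.smul_def]
    simp only [P, T, map_add, map_mul, LinearMap.add_apply, hl']
    simp [LinearMap.sum_apply, hφ, Algebra.smul_def, Finset.mul_sum]
  rw [hgP]
  exact (Module.End.isUnit_iff _).1 hunit

/-- Let `t ≥ 2`, `p = char F_q`, `n = p^s u` with `gcd(u, p) = 1`, `s ≥ 1`.
Let `r ∈ F_q[x]` be nonzero of degree at most `v = n - 1 - u⌈p^s/t⌉`, set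
`l = r (x^u - 1)^{⌈p^s/t⌉}`, and let `L_r` be the map induced by the linearized
`q`-associate of `l`.  Let `α, β ∈ F_q*` and `Tr` be the absolute trace.  Then
`x ↦ L_r x + α Tr x + β x` is a bijection of `F_{q^n}`, and if `β ≠ -1` it is a complete
permutation. -/
theorem stmt_15 {Fq K : Type*} [Field Fq] [Field K] [Algebra Fq K]
    [Fintype Fq] [Fintype K] (q n : ℕ)
    (hq : Fintype.card Fq = q) (hcard : Fintype.card K = q ^ n) (hn : 1 < n)
    (t p s u : ℕ) (ht : 2 ≤ t) (hp : CharP Fq p) (hs : 1 ≤ s)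
    (hu : Nat.Coprime u p) (hnsu : n = p ^ s * u)
    (r : Polynomial Fq) (hr : r ≠ 0)
    (hdeg : r.natDegree ≤ n - 1 - u * ((p ^ s + t - 1) / t))
    (l : Polynomial Fq)
    (hl : l = r * (Polynomial.X ^ u - 1) ^ ((p ^ s + t - 1) / t))
    (L : K → K)
    (hL : ∀ z, L z = ∑ i ∈ Finset.range (l.natDegree + 1),
        algebraMap Fq K (l.coeff i) * z ^ q ^ i)
    (α β : Fq) (hα : α ≠ 0) (hβ : β ≠ 0)
    (f : K → K)
    (hf : ∀ z, f z = L z + algebraMap Fq K α * (∑ i ∈ Finset.range n, z ^ q ^ i)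
        + algebraMap Fq K β * z) :
    Function.Bijective f ∧ (β ≠ -1 → Function.Bijective (fun z => f z + z)) := by
  constructor
  · exact aux_key q n hq hcard t p s u ht hp hs hnsu r l hl α β hβ f
      (fun z => by rw [hf, hL])
  · intro hb
    refine aux_key q n hq hcard t p s u ht hp hs hnsu r l hl α (β + 1)
      (fun h => hb (eq_neg_of_add_eq_zero_left h)) _ (fun z => ?_)
    simp only [hf, hL, map_add, map_one]
    ring
end

section
/- Let p be the characteristic of F_q, let M : F_{q^n} → F_{q^n} be an F_q-linear map that is not the zero map and satisfies M(M(x)) = 0 for all x ∈ F_{q^n}, and let K : F_{q^n} → F_{q^n} be a bijective F_q-linear map commuting with M. For a ∈ F_{q^n}, let m_a be the least positive integer d with K^(d)(a) = a, and let m_a' be the least positive integer d with (M+K)^(d)(a) = a. Then m_a' divides lcm(m_a, p), and if M(a) = 0, then m_a' = m_a. -/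
/-- Let `p = char F_q`, `M` a nonzero `F_q`-linear map of `F_{q^n}` with
`M (M x) = 0` for all `x`, and `N` a bijective `F_q`-linear map commuting with `M`.  For
`a ∈ F_{q^n}`, let `m_a` be the least positive `d` with `N^(d)(a) = a` and `m_a'` the least
positive `d` with `(M+N)^(d)(a) = a`.  Then `m_a' ∣ lcm(m_a, p)`, and if `M a = 0` then
`m_a' = m_a`. -/
theorem stmt_16 {Fq K : Type*} [Field Fq] [Field K] [Algebra Fq K]
    [Fintype Fq] [Fintype K] (q n : ℕ)
    (hq : Fintype.card Fq = q) (hcard : Fintype.card K = q ^ n) (hn : 1 < n)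
    (p : ℕ) (hp : CharP Fq p)
    (M N : Module.End Fq K)
    (hM0 : M ≠ 0) (hM2 : ∀ x : K, M (M x) = 0)
    (hN : Function.Bijective ⇑N) (hcomm : N * M = M * N)
    (a : K) (ma ma' : ℕ)
    (hma : 0 < ma) (hmaFix : (⇑N)^[ma] a = a)
    (hmaMin : ∀ j : ℕ, 0 < j → j < ma → (⇑N)^[j] a ≠ a)
    (hma' : 0 < ma') (hmaFix' : (fun x : K => M x + N x)^[ma'] a = a)
    (hmaMin' : ∀ j : ℕ, 0 < j → j < ma' → (fun x : K => M x + N x)^[j] a ≠ a) :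
    ma' ∣ Nat.lcm ma p ∧ (M a = 0 → ma' = ma) := by
  have hc : ∀ x, N (M x) = M (N x) := fun x => by
    simpa using LinearMap.congr_fun hcomm x
  have key : ∀ d : ℕ, (fun x : K => M x + N x)^[d + 1] a
      = (⇑N)^[d + 1] a + ((d + 1 : ℕ) : Fq) • M ((⇑N)^[d] a) := by
    intro d
    induction d with
    | zero => simp [add_comm]
    | succ d ih =>
      rw [Function.iterate_succ_apply', ih]
      simp only [map_add, map_smul, hM2, hc, smul_zero, add_zero]
      rw [← Function.iterate_succ_apply' (⇑N), ← Function.iterate_succ_apply' (⇑N)]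
      push_cast
      simp only [add_smul, one_smul]
      abel
  have aux : ∀ (f : K → K) (m : ℕ), 0 < m → f^[m] a = a →
      (∀ j : ℕ, 0 < j → j < m → f^[j] a ≠ a) → m = Function.minimalPeriod f a := by
    intro f m hm h1 h2
    have hP : Function.IsPeriodicPt f m a := h1
    have hle := hP.minimalPeriod_le hm
    by_contra hne
    exact h2 _ (hP.minimalPeriod_pos hm) (lt_of_le_of_ne hle (Ne.symm hne))
      (Function.isPeriodicPt_minimalPeriod f a)
  have e1 := aux _ ma hma hmaFix hmaMin
  have e2 := aux _ ma' hma' hmaFix' hmaMin'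
  constructor
  · rw [e2]
    apply Function.IsPeriodicPt.minimalPeriod_dvd
    have hd1 : ma ∣ Nat.lcm ma p := Nat.dvd_lcm_left _ _
    have hd2 : p ∣ Nat.lcm ma p := Nat.dvd_lcm_right _ _
    generalize Nat.lcm ma p = L at hd1 hd2
    cases L with
    | zero => rfl
    | succ d =>
      have h1 : (⇑N)^[d + 1] a = a := by
        have : Function.IsPeriodicPt (⇑N) ma a := hmaFix
        exact this.trans_dvd hd1
      have h2 : ((d + 1 : ℕ) : Fq) = 0 := (CharP.cast_eq_zero_iff Fq p _).2 hd2
      change (fun x : K => M x + N x)^[d + 1] a = a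
      rw [key, h1, h2, zero_smul, add_zero]
  · intro ha
    have hz : ∀ d : ℕ, M ((⇑N)^[d] a) = 0 := by
      intro d
      induction d with
      | zero => simpa using ha
      | succ d ih => rw [Function.iterate_succ_apply', ← hc, ih, map_zero]
    have he : ∀ d : ℕ, 0 < d → (fun x : K => M x + N x)^[d] a = (⇑N)^[d] a := by
      intro d hd
      obtain ⟨k, rfl⟩ := Nat.exists_eq_succ_of_ne_zero hd.ne'
      rw [Nat.succ_eq_add_one, key, hz, smul_zero, add_zero]
    apply le_antisymm
    · by_contra h
      exact hmaMin' ma hma (not_le.1 h) ((he ma hma).trans hmaFix)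
    · by_contra h
      exact hmaMin ma' hma' (not_le.1 h) ((he ma' hma').symm.trans hmaFix')
end

section
/- Let p be the characteristic of F_q, let M : F_{q^n} → F_{q^n} be an F_q-linear map that is not the zero map and satisfies M(M(x)) = 0 for all x ∈ F_{q^n}, and let K : F_{q^n} → F_{q^n} be a bijective F_q-linear map commuting with M whose order s (least positive integer with K^(s) = id) satisfies gcd(s, p) = 1. For a ∈ F_{q^n}, let m_a be the least positive integer d with K^(d)(a) = a, and let m_a' be the least positive integer d with (M+K)^(d)(a) = a. Then m_a' = m_a if M(a) = 0, and m_a' = p·m_a if M(a) ≠ 0. -/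
theorem aux_minper {α : Type*} (f : α → α) (a : α) (m : ℕ) (h0 : 0 < m) (h1 : f^[m] a = a)
    (h2 : ∀ j : ℕ, 0 < j → j < m → f^[j] a ≠ a) : m = Function.minimalPeriod f a := by
  have hper : Function.IsPeriodicPt f m a := h1
  apply le_antisymm
  · by_contra hlt
    exact h2 _ (hper.minimalPeriod_pos h0) (not_le.mp hlt) (Function.iterate_minimalPeriod)
  · exact hper.minimalPeriod_le h0

/-- Let `p = char F_q`, `M` a nonzero `F_q`-linear map of `F_{q^n}` with
`M (M x) = 0` for all `x`, and `N` a bijective `F_q`-linear map commuting with `M`, whose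
order `s` satisfies `gcd(s, p) = 1`.  For `a ∈ F_{q^n}`, with `m_a` (resp. `m_a'`) the least
positive `d` with `N^(d)(a) = a` (resp. `(M+N)^(d)(a) = a`):  `m_a' = m_a` if `M a = 0`, and
`m_a' = p·m_a` if `M a ≠ 0`. -/
theorem stmt_17 {Fq K : Type*} [Field Fq] [Field K] [Algebra Fq K]
    [Fintype Fq] [Fintype K] (q n : ℕ)
    (hq : Fintype.card Fq = q) (hcard : Fintype.card K = q ^ n) (hn : 1 < n)
    (p : ℕ) (hp : CharP Fq p)
    (M N : Module.End Fq K)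
    (hM0 : M ≠ 0) (hM2 : ∀ x : K, M (M x) = 0)
    (hN : Function.Bijective ⇑N) (hcomm : N * M = M * N)
    (s : ℕ) (hs : 0 < s) (hNs : N ^ s = 1)
    (hsmin : ∀ j : ℕ, 0 < j → j < s → N ^ j ≠ 1)
    (hsp : Nat.Coprime s p)
    (a : K) (ma ma' : ℕ)
    (hma : 0 < ma) (hmaFix : (⇑N)^[ma] a = a)
    (hmaMin : ∀ j : ℕ, 0 < j → j < ma → (⇑N)^[j] a ≠ a)
    (hma' : 0 < ma') (hmaFix' : (fun x : K => M x + N x)^[ma'] a = a)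
    (hmaMin' : ∀ j : ℕ, 0 < j → j < ma' → (fun x : K => M x + N x)^[j] a ≠ a) :
    (M a = 0 → ma' = ma) ∧ (M a ≠ 0 → ma' = p * ma) := by
  have hc : ∀ x, N (M x) = M (N x) := fun x => LinearMap.congr_fun hcomm x
  have hcd : ∀ d : ℕ, ∀ x, (⇑N)^[d] (M x) = M ((⇑N)^[d] x) := by
    intro d
    induction d with
    | zero => intro x; rfl
    | succ d ih => intro x; rw [Function.iterate_succ_apply, hc, ih, Function.iterate_succ_apply]
  have key : ∀ d : ℕ, N ((fun x : K => M x + N x)^[d] a)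
      = (⇑N)^[d] (N a) + (d : Fq) • (⇑N)^[d] (M a) := by
    intro d
    induction d with
    | zero => simp
    | succ d ih =>
      have hN' : ∀ x, N (M x + N x) = M (N x) + N (N x) := by intro x; rw [map_add, hc]
      rw [Function.iterate_succ_apply']
      rw [hN', ih, map_add, map_add, map_smul, map_smul, hcd d a, hM2, smul_zero, ← hcd,
        Function.iterate_succ_apply' _ d (N a), Function.iterate_succ_apply' _ d (M a), ← hcd d a,
        ← hc, ← Function.iterate_succ_apply, Function.iterate_succ_apply']
      push_cast
      rw [add_smul, one_smul]
      abel
  have hmin := aux_minper _ a ma hma hmaFix hmaMin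
  have hmin' := aux_minper _ a ma' hma' hmaFix' hmaMin'
  have hcomN : ∀ d : ℕ, (⇑N)^[d] (N a) = N ((⇑N)^[d] a) := by
    intro d; rw [← Function.iterate_succ_apply, Function.iterate_succ_apply']
  have hmas : ma ∣ s := by
    rw [hmin]
    apply Function.IsPeriodicPt.minimalPeriod_dvd
    change (⇑N)^[s] a = a
    rw [← Module.End.pow_apply, hNs]; rfl
  refine ⟨fun h => ?_, fun h => ?_⟩
  · have h0 : ∀ d : ℕ, (⇑N)^[d] (0 : K) = 0 := by
      intro d; rw [← Module.End.pow_apply, map_zero]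
    have he : ∀ d : ℕ, (fun x : K => M x + N x)^[d] a = (⇑N)^[d] a := by
      intro d
      apply hN.1
      rw [key, h, h0, smul_zero, add_zero, hcomN]
    apply le_antisymm
    · by_contra hlt
      exact hmaMin' ma hma (not_le.mp hlt) (by rw [he, hmaFix])
    · by_contra hlt
      exact hmaMin ma' hma' (not_le.mp hlt) (by rw [← he, hmaFix'])
  · have hp0 : 0 < p := Nat.pos_of_ne_zero (CharP.char_ne_zero_of_finite Fq p)
    have k1 := key ma'
    rw [hmaFix'] at k1
    have k2 : (⇑N)^[ma'] (M a) = M a := by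
      have h3 := congrArg M k1
      rw [map_add, map_smul, hcd ma' a, hM2, smul_zero, add_zero, hcomN, ← hc, ← hc] at h3
      rw [hcd]; exact (hN.1 h3).symm
    rw [k2] at k1
    have k3 : ∀ j : ℕ, N a = (⇑N)^[ma' * j] (N a) + ((ma' * j : ℕ) : Fq) • M a := by
      intro j
      induction j with
      | zero => simp
      | succ j ih =>
        have h4 := congrArg ((⇑N)^[ma']) ih
        have hl : ∀ (c : Fq) (x y : K), (⇑N)^[ma'] (x + c • y)
            = (⇑N)^[ma'] x + c • (⇑N)^[ma'] y := by
          intro c x y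
          simp only [← Module.End.pow_apply, map_add, map_smul]
        rw [hl, k2, ← Function.iterate_add_apply] at h4
        have h8 : ma' * (j + 1) = ma' + ma' * j := by ring
        rw [h8, Nat.cast_add, add_comm (ma' : Fq), add_smul, ← add_assoc, ← h4]
        exact k1
    have k4 : ((ma' * s : ℕ) : Fq) • M a = 0 := by
      have h5 := k3 s
      rw [← Module.End.pow_apply, mul_comm ma' s, pow_mul, hNs, one_pow] at h5
      rw [mul_comm ma' s]
      simpa using h5
    have k5 : p ∣ ma' := by
      have h6 := (smul_eq_zero.mp k4).resolve_right h
      rw [CharP.cast_eq_zero_iff Fq p] at h6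
      exact hsp.symm.dvd_of_dvd_mul_right h6
    have k6 : ma ∣ ma' := by
      rw [hmin]
      apply Function.IsPeriodicPt.minimalPeriod_dvd
      change (⇑N)^[ma'] a = a
      rw [(CharP.cast_eq_zero_iff Fq p ma').mpr k5, zero_smul, add_zero, hcomN] at k1
      exact (hN.1 k1).symm
    apply Nat.dvd_antisymm
    · rw [hmin']
      apply Function.IsPeriodicPt.minimalPeriod_dvd
      change (fun x : K => M x + N x)^[p * ma] a = a
      apply hN.1
      have h7 : (⇑N)^[p * ma] a = a := by
        have : Function.IsPeriodicPt (⇑N) ma a := hmaFix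
        exact this.const_mul p
      rw [key, (CharP.cast_eq_zero_iff Fq p _).mpr (Dvd.intro _ rfl), zero_smul, add_zero, hcomN, h7]
    · exact Nat.Coprime.mul_dvd_of_dvd_of_dvd (hsp.coprime_dvd_left hmas).symm k5 k6
end

section
/- Let p be the characteristic of F_q, let M : F_{q^n} → F_{q^n} be an F_q-linear map that is not the zero map and satisfies M(M(x)) = 0 for all x ∈ F_{q^n}, let γ ∈ F_q be a nonzero element of multiplicative order s, and let f be the permutation f(x) = M(x) + γx of F_{q^n}. Then for a ∈ F_{q^n}, the least positive integer d with f^(d)(a) = a equals: 1 if a = 0; s if a ≠ 0 and M(a) = 0; and p·s if M(a) ≠ 0. Consequently the functional graph of f has one cycle of length 1, (z − 1)/s cycles of length s, and (q^n − z)/(ps) cycles of length ps, where z is the number of roots of M in F_{q^n}. -/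
/-- Let `p = char F_q`, `M` a nonzero `F_q`-linear map of `F_{q^n}` with
`M (M x) = 0` for all `x`, `γ ∈ F_q*` of multiplicative order `s`, and let `f` be the
permutation `f x = M x + γ x`.  For `a ∈ F_{q^n}`, the least positive `d` with
`f^(d)(a) = a` equals: `1` if `a = 0`; `s` if `a ≠ 0` and `M a = 0`; and `p·s` if
`M a ≠ 0`.  Consequently the functional graph of `f` has one cycle of length `1`,
`(z-1)/s` cycles of length `s` and `(q^n - z)/(ps)` cycles of length `ps`, where `z` is the
number of roots of `M` in `F_{q^n}`:  the `z - 1` points with `a ≠ 0`, `M a = 0` split into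
`(z-1)/s` cycles of length `s`, and the `q^n - z` points with `M a ≠ 0` split into
`(q^n - z)/(ps)` cycles of length `ps`. -/
theorem stmt_18 {Fq K : Type*} [Field Fq] [Field K] [Algebra Fq K]
    [Fintype Fq] [Fintype K] (q n : ℕ)
    (hq : Fintype.card Fq = q) (hcard : Fintype.card K = q ^ n) (hn : 1 < n)
    (p : ℕ) (hp : CharP Fq p)
    (M : Module.End Fq K) (hM0 : M ≠ 0) (hM2 : ∀ x : K, M (M x) = 0)
    (γ : Fq) (hγ : γ ≠ 0)
    (s : ℕ) (hs : 0 < s) (hγs : γ ^ s = 1)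
    (hsmin : ∀ j : ℕ, 0 < j → j < s → γ ^ j ≠ 1)
    (f : K → K) (hf : ∀ x, f x = M x + algebraMap Fq K γ * x) :
    (Function.minimalPeriod f 0 = 1) ∧
    (∀ a : K, a ≠ 0 → M a = 0 → Function.minimalPeriod f a = s) ∧
    (∀ a : K, M a ≠ 0 → Function.minimalPeriod f a = p * s) ∧
    Nat.card {x : K // x ≠ 0 ∧ M x = 0}
      = ((Nat.card {x : K // M x = 0} - 1) / s) * s ∧
    Nat.card {x : K // M x ≠ 0}
      = ((q ^ n - Nat.card {x : K // M x = 0}) / (p * s)) * (p * s) := by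
  have hso : orderOf γ = s := by
    rw [orderOf_eq_iff hs]
    exact ⟨hγs, fun j h1 h2 => hsmin j h2 h1⟩
  have hq1 : 1 < q := hq ▸ Fintype.one_lt_card
  have hsq : s ∣ q - 1 := by
    rw [← hso, ← hq]
    exact orderOf_dvd_of_pow_eq_one (FiniteField.pow_card_sub_one_eq_one γ hγ)
  have hpp : p.Prime := CharP.char_is_prime Fq p
  have hpq : p ∣ q := by
    rw [← CharP.cast_eq_zero_iff Fq p, ← hq]
    exact Nat.cast_card_eq_zero Fq
  have hcop : Nat.Coprime p s := by
    have h1 : Nat.Coprime q (q - 1) := by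
      have := (Nat.coprime_self_sub_right (m := 1) (n := q) hq1.le)
      simp [this]
    exact (h1.coprime_dvd_left hpq).coprime_dvd_right hsq
  have hf' : ∀ x, f x = M x + γ • x := fun x => by rw [hf, Algebra.smul_def]
  have hit : ∀ (d : ℕ) (a : K), f^[d] a = γ ^ d • a + ((d : Fq) * γ ^ d * γ⁻¹) • M a := by
    intro d a
    induction d with
    | zero => simp
    | succ d ih =>
      rw [Function.iterate_succ_apply', ih, hf']
      simp only [map_add, map_smul, hM2, smul_zero, add_zero, smul_add, smul_smul]
      have e1 : ((d + 1 : ℕ) : Fq) * γ ^ (d + 1) * γ⁻¹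
          = γ ^ d + γ * ((d : Fq) * γ ^ d * γ⁻¹) := by
        push_cast
        field_simp
        ring
      rw [e1, add_smul, pow_succ']
      abel
  have hper0 : ∀ (a : K), a ≠ 0 → M a = 0 → Function.minimalPeriod f a = s := by
    intro a ha hMa
    have key : ∀ d, f^[d] a = a ↔ s ∣ d := by
      intro d
      rw [hit, hMa, smul_zero, add_zero, ← hso, orderOf_dvd_iff_pow_eq_one]
      constructor
      · intro h
        exact smul_left_injective Fq ha (by simpa using h)
      · intro h
        rw [h, one_smul]
    apply Nat.dvd_antisymm
    · exact Function.IsPeriodicPt.minimalPeriod_dvd ((key s).2 dvd_rfl)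
    · exact (key _).1 Function.iterate_minimalPeriod
  have hper1 : ∀ (a : K), M a ≠ 0 → Function.minimalPeriod f a = p * s := by
    intro a hMa
    have key : ∀ d, f^[d] a = a ↔ p * s ∣ d := by
      intro d
      rw [hit]
      constructor
      · intro h
        have h1 : γ ^ d = 1 := by
          have h2 := congrArg M h
          simp only [map_add, map_smul, hM2, smul_zero, add_zero] at h2
          exact smul_left_injective Fq hMa (by simpa using h2)
        have h3 : (d : Fq) = 0 := by
          rw [h1] at h
          simpa [hMa, hγ] using h
        refine hcop.mul_dvd_of_dvd_of_dvd ?_ ?_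
        · exact (CharP.cast_eq_zero_iff Fq p d).1 h3
        · rw [← hso]
          exact orderOf_dvd_of_pow_eq_one h1
      · intro h
        have h1 : γ ^ d = 1 := by
          rw [← orderOf_dvd_iff_pow_eq_one, hso]
          exact (dvd_mul_left s p).trans h
        have h3 : (d : Fq) = 0 :=
          (CharP.cast_eq_zero_iff Fq p d).2 ((dvd_mul_right p s).trans h)
        simp [h1, h3]
    apply Nat.dvd_antisymm
    · exact Function.IsPeriodicPt.minimalPeriod_dvd ((key _).2 dvd_rfl)
    · exact (key _).1 Function.iterate_minimalPeriod
  obtain ⟨k, hk0, hz⟩ : ∃ k, k ≠ 0 ∧ Nat.card {x : K // M x = 0} = q ^ k := by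
    have h1 : Nat.card (LinearMap.ker M) = q ^ Module.finrank Fq (LinearMap.ker M) := by
      rw [Module.natCard_eq_pow_finrank (K := Fq), Nat.card_eq_fintype_card, hq]
    refine ⟨Module.finrank Fq (LinearMap.ker M), ?_, h1⟩
    intro h0
    rw [Submodule.finrank_eq_zero] at h0
    apply hM0
    ext x
    have : M x ∈ LinearMap.ker M := hM2 x
    rw [h0] at this
    simpa using this
  have hc0 : Nat.card {x : K // x ≠ 0 ∧ M x = 0} = Nat.card {x : K // M x = 0} - 1 := by
    have h1 : Nat.card {x : K // x ≠ 0 ∧ M x = 0} = ({x | M x = 0} \ {0} : Set K).ncard := by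
      rw [← Nat.card_coe_set_eq]
      refine Nat.card_congr (Equiv.subtypeEquivRight fun x => ?_)
      simp [and_comm]
    rw [h1, Set.ncard_sdiff_singleton_of_mem (by simp)]
    rfl
  have hc1 : Nat.card {x : K // M x ≠ 0} = q ^ n - Nat.card {x : K // M x = 0} := by
    classical
    rw [Nat.card_eq_fintype_card, Nat.card_eq_fintype_card, ← hcard]
    exact Fintype.card_subtype_compl _
  have hsk : ∀ j, s ∣ q ^ j - 1 := fun j => hsq.trans (Nat.sub_one_dvd_pow_sub_one q j)
  refine ⟨?_, hper0, hper1, ?_, ?_⟩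
  · rw [Function.minimalPeriod_eq_one_iff_isFixedPt]
    simp [Function.IsFixedPt, hf]
  · rw [hc0, hz, Nat.div_mul_cancel (hsk k)]
  · rw [hc1, hz, Nat.div_mul_cancel]
    refine hcop.mul_dvd_of_dvd_of_dvd ?_ ?_
    · exact Nat.dvd_sub (hpq.trans (dvd_pow_self q (by omega))) (hpq.trans (dvd_pow_self q hk0))
    · have e : q ^ n - q ^ k = (q ^ n - 1) - (q ^ k - 1) := by
        have := Nat.pow_pos (n := k) (show 0 < q by omega)
        omega
      rw [e]
      exact Nat.dvd_sub (hsk n) (hsk k)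
end

section
/- Suppose F_{q^n} has characteristic 2, and let M : F_{q^n} → F_{q^n} be an F_q-linear map that is not the zero map and satisfies M(M(x)) = 0 for all x ∈ F_{q^n}. Let Z_M = {z ∈ F_{q^n} : M(z) = 0} be the kernel of M and V_M = {M(z) : z ∈ F_{q^n}} its image, and suppose a ∈ Z_M but a ∉ V_M. Then the map f(x) = M(x) + x + a is an involution of F_{q^n} with no fixed points: f(f(z)) = z and f(z) ≠ z for all z ∈ F_{q^n}. Moreover, if the dimension of V_M as an F_q-vector space is less than n/2, then there exists an element b ∈ Z_M with b ∉ V_M. -/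
/-- The "moreover" part, proved by dimension count, without assuming any `a` exists. -/
theorem exists_ker_not_range {Fq K : Type*} [Field Fq] [Field K] [Algebra Fq K]
    [Fintype Fq] [Fintype K] (q n : ℕ)
    (hq : Fintype.card Fq = q) (hcard : Fintype.card K = q ^ n)
    (M : Module.End Fq K)
    (h : 2 * Module.finrank Fq (LinearMap.range M) < n) :
    ∃ b : K, M b = 0 ∧ b ∉ Set.range M := by
  have hfin : Module.finrank Fq K = n := by
    have h1 := Module.card_eq_pow_finrank (K := Fq) (V := K)
    rw [hcard, hq] at h1
    have hq1 : 1 < q := hq ▸ Fintype.one_lt_card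
    exact (Nat.pow_right_injective hq1 h1).symm
  have hrn := LinearMap.finrank_range_add_finrank_ker M
  by_contra hcon
  push Not at hcon
  have hle : LinearMap.ker M ≤ LinearMap.range M := fun b hb => by
    obtain ⟨y, hy⟩ := hcon b (LinearMap.mem_ker.mp hb)
    exact ⟨y, hy⟩
  have := Submodule.finrank_mono hle
  omega


/-- Suppose `F_{q^n}` has characteristic `2`, and let `M` be a nonzero
`F_q`-linear map of `F_{q^n}` with `M (M x) = 0` for all `x`.  Let `Z_M` be the kernel of
`M` and `V_M` its image, and suppose `a ∈ Z_M` but `a ∉ V_M`.  Then `f x = M x + x + a` is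
an involution of `F_{q^n}` with no fixed points.  Moreover, if `dim_{F_q} V_M < n/2`, then
there exists `b ∈ Z_M` with `b ∉ V_M`. -/
theorem stmt_19 {Fq K : Type*} [Field Fq] [Field K] [Algebra Fq K]
    [Fintype Fq] [Fintype K] (q n : ℕ)
    (hq : Fintype.card Fq = q) (hcard : Fintype.card K = q ^ n) (hn : 1 < n)
    (hchar : CharP K 2)
    (M : Module.End Fq K) (hM0 : M ≠ 0) (hM2 : ∀ x : K, M (M x) = 0)
    (a : K) (ha : M a = 0) (ha' : a ∉ Set.range ⇑M)
    (f : K → K) (hf : ∀ x, f x = M x + x + a) :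
    (∀ z : K, f (f z) = z) ∧ (∀ z : K, f z ≠ z) ∧
      (2 * Module.finrank Fq ↥(LinearMap.range M) < n →
        ∃ b : K, M b = 0 ∧ b ∉ Set.range ⇑M) := by
  refine ⟨fun z => ?_, fun z hz => ?_, exists_ker_not_range q n hq hcard M⟩
  · rw [hf (f z), hf z, map_add, map_add, hM2, ha]
    have h1 := CharTwo.add_self_eq_zero (M z)
    have h2 := CharTwo.add_self_eq_zero a
    linear_combination h1 + h2
  · apply ha'
    refine ⟨z, ?_⟩
    rw [hf z] at hz
    have h2 := CharTwo.add_self_eq_zero a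
    linear_combination hz - h2
end
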